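/- arXiv:2311.02837 — 4 statements merged into one kernel-verified Lean document; each statement's English description precedes it below -/
import Mathlib

section
/- (Complex S-lemma.) Let Q₁, Q₂ ∈ ℂ^{n×n} be Hermitian matrices, r₁, r₂ ∈ ℂⁿ, and s₁, s₂ ∈ ℝ. Define f(x) = Re(xᴴ Q₁ x) + 2 Re(xᴴ r₁) + s₁ and g(x) = Re(xᴴ Q₂ x) + 2 Re(xᴴ r₂) + s₂ for x ∈ ℂⁿ. Assume there exists x₀ ∈ ℂⁿ with g(x₀) < 0. Then the following are equivalent: (i) for all x ∈ ℂⁿ, g(x) ≤ 0 implies f(x) ≥ 0; (ii) there exists μ ≥ 0 such that the (n+1)×(n+1) block matrix [[Q₁, r₁],[r₁ᴴ, s₁]] + μ·[[Q₂, r₂],[r₂ᴴ, s₂]] is positive semidefinite. -/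
open Matrix ComplexOrder

def SLQuad {V : Type*} [AddCommGroup V] [Module ℝ V] (F : V → ℝ) : Prop :=
  ∀ u v : V, ∃ a : ℝ, ∀ t : ℝ, F (u + t • v) = F u + t * a + t ^ 2 * F v

lemma sl_key {V : Type*} [AddCommGroup V] [Module ℝ V] {F G : V → ℝ}
    (hF : SLQuad F) (hG : SLQuad G) (h : ∀ z, G z ≤ 0 → 0 ≤ F z)
    (u v : V) (hu : 0 < G u) (hv : G v < 0) : 0 ≤ F u * (-G v) + F v * G u := by
  obtain ⟨a, ha⟩ := hF u v
  obtain ⟨b, hb⟩ := hG u v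
  set D := b ^ 2 - 4 * G v * G u with hD
  have hDpos : b ^ 2 < D := by nlinarith [mul_pos hu (neg_pos.2 hv)]
  have hD0 : 0 ≤ D := (sq_nonneg b).trans hDpos.le
  set d := Real.sqrt D with hd
  have hdd : d ^ 2 = D := Real.sq_sqrt hD0
  have hd1 : |b| < d := by
    rw [hd]; exact Real.lt_sqrt_of_sq_lt (by rwa [sq_abs])
  obtain ⟨hb1, hb2⟩ := abs_lt.1 hd1
  have hg : G v ≠ 0 := hv.ne
  have root : ∀ e : ℝ, e ^ 2 = D →
      0 ≤ F u + ((-b + e) / (2 * G v)) * a + ((-b + e) / (2 * G v)) ^ 2 * F v := by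
    intro e he
    rw [← ha]
    apply h
    rw [hb]
    apply le_of_eq
    have : G u + (-b + e) / (2 * G v) * b + ((-b + e) / (2 * G v)) ^ 2 * G v
        = (e ^ 2 - D) / (4 * G v) := by
      rw [hD]; field_simp; ring
    rw [this, he]; simp
  have h1 := root d hdd
  have h2 := root (-d) (by rw [neg_sq]; exact hdd)
  set p := (-b + d) / (2 * G v) with hp
  set q := (-b + -d) / (2 * G v) with hq
  have hp0 : p < 0 := div_neg_of_pos_of_neg (by linarith) (by linarith)
  have hq0 : 0 < q := div_pos_of_neg_of_neg (by linarith) (by linarith)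
  have hpq : p * q * G v = G u := by
    have : p * q * G v = (b ^ 2 - d ^ 2) / (4 * G v) := by
      rw [hp, hq]; field_simp; ring
    rw [this, hdd, hD]; field_simp; ring
  have h3 : 0 ≤ (q - p) * (F u - p * q * F v) := by
    nlinarith [mul_nonneg hq0.le h1, mul_nonneg (neg_pos.2 hp0).le h2]
  have h4 : 0 ≤ F u - p * q * F v := nonneg_of_mul_nonneg_right h3 (by linarith)
  rw [← hpq]
  nlinarith [mul_nonneg h4 (neg_pos.2 hv).le]

lemma sl_hom {V : Type*} [AddCommGroup V] [Module ℝ V] {F G : V → ℝ}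
    (hF : SLQuad F) (hG : SLQuad G) (h : ∀ z, G z ≤ 0 → 0 ≤ F z)
    (z₀ : V) (h₀ : G z₀ < 0) : ∃ μ : ℝ, 0 ≤ μ ∧ ∀ z, 0 ≤ F z + μ * G z := by
  set S : Set ℝ := (fun v => F v / (-G v)) '' {v | G v < 0} with hS
  have hne : S.Nonempty := ⟨_, z₀, h₀, rfl⟩
  have hlb : ∀ y ∈ S, 0 ≤ y := by
    rintro _ ⟨v, hv, rfl⟩
    exact div_nonneg (h v (le_of_lt hv)) (neg_pos.2 hv).le
  refine ⟨sInf S, le_csInf hne hlb, fun z => ?_⟩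
  rcases lt_trichotomy (G z) 0 with hz | hz | hz
  · have := csInf_le ⟨0, hlb⟩ (⟨z, hz, rfl⟩ : F z / (-G z) ∈ S)
    rw [le_div_iff₀ (neg_pos.2 hz)] at this
    linarith
  · rw [hz]; simpa using h z hz.le
  · have : -F z / G z ≤ sInf S := by
      apply le_csInf hne
      rintro _ ⟨v, hv, rfl⟩
      have hv' : G v < 0 := hv
      have := sl_key hF hG h z v hz hv
      change -F z / G z ≤ F v / (-G v)
      rw [div_le_div_iff₀ hz (neg_pos.2 hv')]
      linarith
    rw [div_le_iff₀ hz] at this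
    linarith

lemma sl_inf {V : Type*} [AddCommGroup V] [Module ℝ V] {F G : V → ℝ}
    (hF : SLQuad F) (hG : SLQuad G) (z₀ z : V) (h₀ : G z₀ < 0)
    (h : ∀ k : ℝ, G (z₀ + k • z) ≤ 0 → 0 ≤ F (z₀ + k • z)) (hz : G z ≤ 0) : 0 ≤ F z := by
  obtain ⟨a, ha⟩ := hF z₀ z
  obtain ⟨b, hb⟩ := hG z₀ z
  by_contra! hc
  set k := 1 + (|F z₀| + |a|) / (-F z) with hk
  have hk1 : 1 ≤ k := by
    have : 0 ≤ (|F z₀| + |a|) / (-F z) := div_nonneg (by positivity) (by linarith)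
    linarith
  have hkF : k * F z = F z - |F z₀| - |a| := by
    have := hc.ne
    rw [hk]; field_simp; ring
  have key : ∀ e : ℝ, |e| = k → e * b ≤ 0 → False := by
    intro e he heb
    have he2 : e ^ 2 = k ^ 2 := by rw [← sq_abs, he]
    have h1 := h e (by rw [hb]; nlinarith [sq_nonneg e])
    rw [ha, he2] at h1
    have h2 : e * a ≤ k * |a| := by rw [← he, ← abs_mul]; exact le_abs_self _
    have h3 : k ^ 2 * F z = k * (F z - |F z₀| - |a|) := by rw [← hkF]; ring
    nlinarith [le_abs_self (F z₀), abs_nonneg (F z₀)]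
  rcases le_total b 0 with hb0 | hb0
  · exact key k (abs_of_nonneg (by linarith)) (by nlinarith)
  · exact key (-k) (by rw [abs_neg]; exact abs_of_nonneg (by linarith)) (by nlinarith)

lemma sl_quad {m : Type*} [Fintype m] (M : Matrix m m ℂ) :
    SLQuad (fun z : m → ℂ => (star z ⬝ᵥ M *ᵥ z).re) := by
  intro u v
  refine ⟨(star u ⬝ᵥ M *ᵥ v).re + (star v ⬝ᵥ M *ᵥ u).re, fun t => ?_⟩
  have : star (t • v) = t • star v := by ext i; simp
  simp only [star_add, this, mulVec_add, mulVec_smul, add_dotProduct, dotProduct_add,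
    smul_dotProduct, dotProduct_smul, Complex.add_re, Complex.smul_re, smul_eq_mul]
  ring

lemma sl_scale {m : Type*} [Fintype m] (M : Matrix m m ℂ) (c : ℂ) (z : m → ℂ) :
    (star (c • z) ⬝ᵥ M *ᵥ (c • z)).re = Complex.normSq c * (star z ⬝ᵥ M *ᵥ z).re := by
  rw [star_smul, mulVec_smul, smul_dotProduct, dotProduct_smul, smul_eq_mul, smul_eq_mul,
    ← mul_assoc]
  have : star c * c = (Complex.normSq c : ℂ) := by
    rw [Complex.normSq_eq_conj_mul_self]; rfl
  rw [this, Complex.re_ofReal_mul]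

def slBlk {n : ℕ} (Q : Matrix (Fin n) (Fin n) ℂ) (r : Fin n → ℂ) (s : ℝ) :
    Matrix (Fin n ⊕ Unit) (Fin n ⊕ Unit) ℂ :=
  Matrix.fromBlocks Q (Matrix.of fun i (_ : Unit) => r i)
            (Matrix.of fun (_ : Unit) j => star (r j))
            (Matrix.of fun (_ : Unit) (_ : Unit) => (s : ℂ))

lemma slBlk_herm {n : ℕ} {Q : Matrix (Fin n) (Fin n) ℂ} (hQ : Q.IsHermitian) (r : Fin n → ℂ)
    (s : ℝ) : (slBlk Q r s).IsHermitian := by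
  unfold slBlk
  apply Matrix.IsHermitian.fromBlocks hQ
  · ext i j; simp
  · ext i j; simp

lemma slBlk_eval {n : ℕ} (Q : Matrix (Fin n) (Fin n) ℂ) (r : Fin n → ℂ) (s : ℝ)
    (z : Fin n ⊕ Unit → ℂ) (hz : z (Sum.inr ()) = 1) :
    (star z ⬝ᵥ slBlk Q r s *ᵥ z).re =
      (star (z ∘ Sum.inl) ⬝ᵥ Q.mulVec (z ∘ Sum.inl)).re
        + 2 * (star (z ∘ Sum.inl) ⬝ᵥ r).re + s := by
  unfold slBlk
  rw [fromBlocks_mulVec]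
  simp only [dotProduct, Fintype.sum_sum_type, Pi.star_apply, Sum.elim_inl, Sum.elim_inr,
    Pi.add_apply, mulVec, Matrix.of_apply, Function.comp, hz, Finset.univ_unique,
    Finset.sum_singleton, PUnit.default_eq_unit, mul_add, Finset.sum_add_distrib, mul_one,
    star_one, one_mul, Complex.add_re, Complex.ofReal_re, Complex.re_sum]
  have : ∀ i, (star (r i) * z (Sum.inl i)).re = (star (z (Sum.inl i)) * r i).re := by
    intro i; simp; ring
  simp only [this]
  ring


/-- The complex S-lemma. -/
theorem stmt_1 {n : ℕ}
    (Q₁ Q₂ : Matrix (Fin n) (Fin n) ℂ) (hQ₁ : Q₁.IsHermitian) (hQ₂ : Q₂.IsHermitian)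
    (r₁ r₂ : Fin n → ℂ) (s₁ s₂ : ℝ)
    (hx₀ : ∃ x₀ : Fin n → ℂ,
      (star x₀ ⬝ᵥ Q₂.mulVec x₀).re + 2 * (star x₀ ⬝ᵥ r₂).re + s₂ < 0) :
    (∀ x : Fin n → ℂ,
        (star x ⬝ᵥ Q₂.mulVec x).re + 2 * (star x ⬝ᵥ r₂).re + s₂ ≤ 0 →
          0 ≤ (star x ⬝ᵥ Q₁.mulVec x).re + 2 * (star x ⬝ᵥ r₁).re + s₁) ↔
      (∃ μ : ℝ, 0 ≤ μ ∧
        (Matrix.fromBlocks Q₁ (Matrix.of fun i (_ : Unit) => r₁ i)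
            (Matrix.of fun (_ : Unit) j => star (r₁ j))
            (Matrix.of fun (_ : Unit) (_ : Unit) => (s₁ : ℂ))
          + (μ : ℂ) • Matrix.fromBlocks Q₂ (Matrix.of fun i (_ : Unit) => r₂ i)
            (Matrix.of fun (_ : Unit) j => star (r₂ j))
            (Matrix.of fun (_ : Unit) (_ : Unit) => (s₂ : ℂ))).PosSemidef) := by

  change _ ↔ ∃ μ : ℝ, 0 ≤ μ ∧ (slBlk Q₁ r₁ s₁ + (μ : ℂ) • slBlk Q₂ r₂ s₂).PosSemidef
  have split : ∀ (μ : ℝ) z, (star z ⬝ᵥ (slBlk Q₁ r₁ s₁ + (μ : ℂ) • slBlk Q₂ r₂ s₂) *ᵥ z).re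
      = (star z ⬝ᵥ slBlk Q₁ r₁ s₁ *ᵥ z).re + μ * (star z ⬝ᵥ slBlk Q₂ r₂ s₂ *ᵥ z).re := by
    intro μ z
    rw [add_mulVec, smul_mulVec, dotProduct_add, dotProduct_smul, Complex.add_re, smul_eq_mul,
      Complex.re_ofReal_mul]
  constructor
  · intro h
    obtain ⟨x₀, hx₀⟩ := hx₀
    have aff : ∀ z : Fin n ⊕ Unit → ℂ, z (Sum.inr ()) = 1 →
        (star z ⬝ᵥ slBlk Q₂ r₂ s₂ *ᵥ z).re ≤ 0 → 0 ≤ (star z ⬝ᵥ slBlk Q₁ r₁ s₁ *ᵥ z).re := by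
      intro z hz
      rw [slBlk_eval _ _ _ z hz, slBlk_eval _ _ _ z hz]
      exact h _
    set z₀ : Fin n ⊕ Unit → ℂ := Sum.elim x₀ (fun _ => 1) with hz₀
    have hG₀ : (star z₀ ⬝ᵥ slBlk Q₂ r₂ s₂ *ᵥ z₀).re < 0 := by
      rw [slBlk_eval _ _ _ z₀ rfl]; exact hx₀
    obtain ⟨μ, hμ, H⟩ := sl_hom (sl_quad (slBlk Q₁ r₁ s₁)) (sl_quad (slBlk Q₂ r₂ s₂)) (by
      intro z hz
      by_cases ht : z (Sum.inr ()) = 0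
      · refine sl_inf (sl_quad (slBlk Q₁ r₁ s₁)) (sl_quad (slBlk Q₂ r₂ s₂)) z₀ z hG₀ ?_ hz
        intro k
        exact aff _ (by simp [hz₀, ht])
      · have hp : 0 < Complex.normSq (z (Sum.inr ()))⁻¹ :=
          Complex.normSq_pos.2 (inv_ne_zero ht)
        have := aff ((z (Sum.inr ()))⁻¹ • z) (by simp [ht])
        rw [sl_scale, sl_scale] at this
        exact nonneg_of_mul_nonneg_right (this (mul_nonpos_of_nonneg_of_nonpos hp.le hz)) hp)
      z₀ hG₀
    refine ⟨μ, hμ, ?_⟩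
    have hH : (slBlk Q₁ r₁ s₁ + (μ : ℂ) • slBlk Q₂ r₂ s₂).IsHermitian := by
      apply (slBlk_herm hQ₁ r₁ s₁).add
      have := slBlk_herm hQ₂ r₂ s₂
      unfold Matrix.IsHermitian at *
      rw [conjTranspose_smul, this]; simp
    refine Matrix.PosSemidef.of_dotProduct_mulVec_nonneg hH fun z => ?_
    rw [Complex.nonneg_iff]
    refine ⟨?_, (hH.im_star_dotProduct_mulVec_self z).symm⟩
    rw [split]; exact H z
  · rintro ⟨μ, hμ, hP⟩ x hx
    have := (Complex.nonneg_iff.1 (hP.dotProduct_mulVec_nonneg (Sum.elim x (fun _ => 1)))).1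
    rw [split, slBlk_eval _ _ _ _ rfl, slBlk_eval _ _ _ _ rfl, Sum.elim_comp_inl] at this
    have := mul_nonpos_of_nonneg_of_nonpos hμ hx
    linarith
end

section
/- Let Q ∈ ℂ^{M×M} be Hermitian, r ∈ ℂ^M, s ∈ ℝ, d ≥ 0, and μ ≥ 0. If the (M+1)×(M+1) block matrix B(Q,r,s,μ,d) = [[Q + μ I_M, r],[rᴴ, s − μ d²]] is positive semidefinite, then for every x ∈ ℂ^M with ‖x‖ ≤ d, one has f_{Q,r,s}(x) = Re(xᴴ Q x) + 2 Re(xᴴ r) + s ≥ 0. -/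
open Matrix ComplexOrder

theorem stmt_2 {M : ℕ} (Q : Matrix (Fin M) (Fin M) ℂ) (hQ : Q.IsHermitian)
    (r : Fin M → ℂ) (s d μ : ℝ) (hd : 0 ≤ d) (hμ : 0 ≤ μ)
    (hB : (Matrix.fromBlocks (Q + (μ : ℂ) • 1) (Matrix.of fun i (_ : Unit) => r i)
        (Matrix.of fun (_ : Unit) j => star (r j))
        (Matrix.of fun (_ : Unit) (_ : Unit) => ((s - μ * d ^ 2 : ℝ) : ℂ))).PosSemidef) :
    ∀ x : Fin M → ℂ, ‖(EuclideanSpace.equiv (Fin M) ℂ).symm x‖ ≤ d →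
      0 ≤ (star x ⬝ᵥ Q.mulVec x).re + 2 * (star x ⬝ᵥ r).re + s := by
  intro x hx
  have h := hB.dotProduct_mulVec_nonneg (Sum.elim x (fun _ => (1 : ℂ)))
  have h2 := (Complex.le_def.1 h).1
  have hs : star (Sum.elim x (fun _ : Unit => (1 : ℂ))) = Sum.elim (star x) (fun _ => 1) := by
    ext i
    rcases i with i | i <;> simp
  have e1 : (Matrix.of fun i (_ : Unit) => r i) *ᵥ (fun _ : Unit => (1 : ℂ)) = r := by
    ext i
    simp [Matrix.mulVec, dotProduct]
  have e2 : (Matrix.of fun (_ : Unit) j => star (r j)) *ᵥ x = fun _ => star r ⬝ᵥ x := by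
    ext i
    simp [Matrix.mulVec, dotProduct]
  have e3 : (Matrix.of fun (_ : Unit) (_ : Unit) => ((s - μ * d ^ 2 : ℝ) : ℂ)) *ᵥ
      (fun _ : Unit => (1 : ℂ)) = fun _ => ((s - μ * d ^ 2 : ℝ) : ℂ) := by
    ext i
    simp [Matrix.mulVec, dotProduct]
  have e4 : (star r ⬝ᵥ x).re = (star x ⬝ᵥ r).re := by
    simp only [dotProduct, Complex.re_sum]
    refine Finset.sum_congr rfl fun i _ => ?_
    simp
    ring
  have e5 : (star x ⬝ᵥ x).re = ‖(EuclideanSpace.equiv (Fin M) ℂ).symm x‖ ^ 2 := by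
    rw [EuclideanSpace.norm_sq_eq]
    simp only [dotProduct, Complex.re_sum]
    refine Finset.sum_congr rfl fun i _ => ?_
    simp [Complex.sq_norm, Complex.normSq_apply]
  have e6 : (fun _ : Unit => (1 : ℂ)) ⬝ᵥ ((fun _ : Unit => star r ⬝ᵥ x) +
      fun _ : Unit => ((s - μ * d ^ 2 : ℝ) : ℂ)) = star r ⬝ᵥ x + ((s - μ * d ^ 2 : ℝ) : ℂ) := by
    simp [dotProduct]
  rw [hs, Matrix.fromBlocks_mulVec] at h2
  simp only [Sum.elim_comp_inl, Sum.elim_comp_inr, sumElim_dotProduct_sumElim] at h2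
  rw [e1, e2, e3, e6, Matrix.add_mulVec, Matrix.smul_mulVec, Matrix.one_mulVec,
    dotProduct_add, dotProduct_add, dotProduct_smul, smul_eq_mul] at h2
  simp only [Complex.add_re, Complex.re_ofReal_mul, Complex.ofReal_re, Complex.zero_re, e4, e5] at h2
  have h3 : ‖(EuclideanSpace.equiv (Fin M) ℂ).symm x‖ ^ 2 ≤ d ^ 2 :=
    pow_le_pow_left₀ (norm_nonneg _) hx 2
  have h4 := mul_le_mul_of_nonneg_left h3 hμ
  linarith
end

section
/- (Spherical S-lemma.) Let Q ∈ ℂ^{M×M} be Hermitian, r ∈ ℂ^M, s ∈ ℝ, and d > 0. Then the following are equivalent: (i) for every x ∈ ℂ^M with ‖x‖ ≤ d, f_{Q,r,s}(x) = Re(xᴴ Q x) + 2 Re(xᴴ r) + s ≥ 0; (ii) there exists μ ≥ 0 such that the (M+1)×(M+1) block matrix B(Q,r,s,μ,d) = [[Q + μ I_M, r],[rᴴ, s − μ d²]] is positive semidefinite. -/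
open Matrix ComplexOrder

lemma aux_lin (a c : ℝ) (h : ∀ ε : ℝ, 0 < ε → ε ≤ 1 → 0 ≤ a * ε + c * ε ^ 2) : 0 ≤ a := by
  by_contra! ha
  have hc : 0 < |c| + 1 := by positivity
  have hm : 0 < min 1 (-a / (2 * (|c| + 1))) := lt_min one_pos (by apply div_pos <;> linarith)
  have h1 := h _ hm (min_le_left _ _)
  have h2 : min 1 (-a / (2 * (|c| + 1))) ≤ -a / (2 * (|c| + 1)) := min_le_right _ _
  set ε := min 1 (-a / (2 * (|c| + 1)))
  rw [le_div_iff₀ (by linarith)] at h2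
  have h3 : 0 ≤ ε * (a + c * ε) := by linarith
  have h4 : 0 ≤ a + c * ε := nonneg_of_mul_nonneg_right h3 hm
  have : c * ε ≤ |c| * ε := mul_le_mul_of_nonneg_right (le_abs_self c) hm.le
  nlinarith

lemma aux_main {E : Type*} [NormedAddCommGroup E] [InnerProductSpace ℝ E] [FiniteDimensional ℝ E]
    (A : E →ₗ[ℝ] E) (hA : ∀ x y, inner ℝ x (A y) = inner ℝ y (A x)) (b : E) (s d : ℝ) (hd : 0 < d)
    (h : ∀ x, ‖x‖ ≤ d → 0 ≤ inner ℝ x (A x) + 2 * inner ℝ x b + s) :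
    ∃ μ : ℝ, 0 ≤ μ ∧
      (∀ x, 0 ≤ inner ℝ x (A x) + 2 * inner ℝ x b + s + μ * (‖x‖ ^ 2 - d ^ 2)) ∧
      ∀ x, 0 ≤ inner ℝ x (A x) + μ * ‖x‖ ^ 2 := by
  have hcA : Continuous A := A.continuous_of_finiteDimensional
  have hprop : ProperSpace E := FiniteDimensional.proper ℝ E
  obtain ⟨x, hx, hmin⟩ := (isCompact_closedBall (0 : E) d).exists_isMinOn
    ⟨0, by simp [hd.le]⟩ (f := fun x => inner ℝ x (A x) + 2 * inner ℝ x b + s)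
    (by fun_prop)
  have hxd : ‖x‖ ≤ d := by simpa using hx
  have hmin' : ∀ w, ‖x + w‖ ≤ d → 0 ≤ inner ℝ w (A w) + 2 * inner ℝ w (A x + b) := by
    intro w hw
    have := hmin (show x + w ∈ Metric.closedBall (0 : E) d by simpa using hw)
    simp only [Set.mem_ofPred_eq, map_add, inner_add_left, inner_add_right] at this ⊢
    linarith [hA x w]
  set g := A x + b with hg
  have hvar : ∀ z, ‖z‖ ≤ d → 0 ≤ inner ℝ (z - x) g := by
    intro z hz
    have := aux_lin (2 * inner ℝ (z - x) g) (inner ℝ (z - x) (A (z - x))) (by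
      intro ε h0 h1
      have := hmin' (ε • (z - x)) (by
        have e : x + ε • (z - x) = (1 - ε) • x + ε • z := by module
        rw [e]
        refine (norm_add_le _ _).trans ?_
        rw [norm_smul, norm_smul, Real.norm_of_nonneg h0.le, Real.norm_of_nonneg (by linarith)]
        nlinarith)
      simp only [map_smul, real_inner_smul_left, real_inner_smul_right] at this
      nlinarith)
    linarith
  have hgx : inner ℝ x g ≤ - (d * ‖g‖) := by
    rcases eq_or_ne g 0 with h0 | h0
    · simp [h0]
    have hg0 : 0 < ‖g‖ := norm_pos_iff.2 h0
    have := hvar (-(d / ‖g‖) • g) (by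
      rw [norm_smul, norm_neg, Real.norm_of_nonneg (by positivity)]
      field_simp; exact le_rfl)
    rw [inner_sub_left, real_inner_smul_left, real_inner_self_eq_norm_sq] at this
    have e : -(d / ‖g‖) * ‖g‖ ^ 2 = -(d * ‖g‖) := by field_simp
    linarith
  have hkkt : d • g + ‖g‖ • x = 0 := by
    have h1 := norm_add_sq_real (d • g) (‖g‖ • x)
    rw [real_inner_smul_left, real_inner_smul_right, norm_smul, norm_smul,
      Real.norm_of_nonneg hd.le, norm_norm, real_inner_comm] at h1
    have h2 : ‖g‖ ^ 2 * ‖x‖ ^ 2 ≤ ‖g‖ ^ 2 * d ^ 2 := by gcongr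
    have h3 : d * ‖g‖ * inner ℝ x g ≤ d * ‖g‖ * - (d * ‖g‖) := by gcongr
    have h4 : ‖d • g + ‖g‖ • x‖ ^ 2 ≤ 0 := by rw [h1]; nlinarith
    have h5 : ‖d • g + ‖g‖ • x‖ = 0 := by nlinarith [norm_nonneg (d • g + ‖g‖ • x)]
    exact norm_eq_zero.1 h5
  obtain ⟨μ, hμ⟩ : ∃ μ, μ = ‖g‖ / d := ⟨_, rfl⟩
  have hμ0 : 0 ≤ μ := by rw [hμ]; positivity
  have hgμ : g = -(μ • x) := by
    have : g = d⁻¹ • (d • g + ‖g‖ • x) - μ • x := by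
      rw [hμ, smul_add, smul_smul, smul_smul, inv_mul_cancel₀ hd.ne', div_eq_inv_mul]; module
    rw [hkkt] at this
    simpa using this
  have hinn : ∀ w, inner ℝ w g = - (μ * inner ℝ w x) := by
    intro w; rw [hgμ, inner_neg_right, real_inner_smul_right]
  have hdich : μ = 0 ∨ ‖x‖ = d := by
    rcases hxd.eq_or_lt with h | h
    · exact Or.inr h
    left
    have h1 := abs_real_inner_le_norm x g
    have h2 := neg_le_of_abs_le h1
    have : ‖g‖ = 0 := by nlinarith [norm_nonneg g]
    rw [hμ, this, zero_div]
  have hcs : μ * (‖x‖ ^ 2 - d ^ 2) = 0 := by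
    rcases hdich with h | h <;> simp [h]
  have hpsd : ∀ v, 0 ≤ inner ℝ v (A v) + μ * ‖v‖ ^ 2 := by
    rcases hxd.lt_or_eq with hlt | heq
    · have hm : μ = 0 := by
        rcases hdich with h | h
        · exact h
        · exact absurd h hlt.ne
      intro v
      have ht : 0 < (d - ‖x‖) / (‖v‖ + 1) := by
        apply div_pos <;> [linarith; positivity]
      have htv : (d - ‖x‖) / (‖v‖ + 1) * (‖v‖ + 1) = d - ‖x‖ := by field_simp
      set t := (d - ‖x‖) / (‖v‖ + 1)
      have := hmin' (t • v) (by
        refine (norm_add_le _ _).trans ?_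
        rw [norm_smul, Real.norm_of_nonneg ht.le]
        nlinarith)
      rw [hinn, hm] at this
      simp only [map_smul, real_inner_smul_left, real_inner_smul_right] at this
      rw [hm]
      have h2 : 0 ≤ t ^ 2 * inner ℝ v (A v) := by linarith
      have := nonneg_of_mul_nonneg_right h2 (by positivity)
      linarith
    · have key : ∀ v, inner ℝ v x ≠ 0 → 0 ≤ inner ℝ v (A v) + μ * ‖v‖ ^ 2 := by
        intro v hv
        have hv0 : v ≠ 0 := by rintro rfl; simp at hv
        have hvn : 0 < ‖v‖ := norm_pos_iff.2 hv0
        obtain ⟨t, ht⟩ : ∃ t, t = -(2 * inner ℝ v x) / ‖v‖ ^ 2 := ⟨_, rfl⟩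
        have ht0 : t ≠ 0 := by
          rw [ht]; exact div_ne_zero (by simpa using hv) (by positivity)
        have htv : t * ‖v‖ ^ 2 = -(2 * inner ℝ v x) := by rw [ht]; field_simp
        have := hmin' (t • v) (by
          have h1 := norm_add_sq_real x (t • v)
          rw [real_inner_smul_right, norm_smul, real_inner_comm, mul_pow, Real.norm_eq_abs,
            sq_abs] at h1
          have : ‖x + t • v‖ ^ 2 = d ^ 2 := by
            rw [h1, heq]; linear_combination t * htv
          exact (pow_le_pow_iff_left₀ (norm_nonneg _) hd.le two_ne_zero).1 this.le)
        rw [hinn] at this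
        simp only [map_smul, real_inner_smul_left, real_inner_smul_right] at this
        have h2 : 0 ≤ t ^ 2 * (inner ℝ v (A v) + μ * ‖v‖ ^ 2) := by
          have : t ^ 2 * (inner ℝ v (A v) + μ * ‖v‖ ^ 2) =
            t * (t * inner ℝ v (A v)) + 2 * -(μ * (t * inner ℝ v x)) := by
              linear_combination t * μ * htv
          linarith
        exact nonneg_of_mul_nonneg_right h2 (by positivity)
      intro v
      by_cases hv : inner ℝ v x = 0
      · have hcont : Continuous fun ε : ℝ =>
            inner ℝ (v + ε • x) (A (v + ε • x)) + μ * ‖v + ε • x‖ ^ 2 := by fun_prop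
        have ht := (hcont.tendsto 0).mono_left (nhdsWithin_le_nhds (s := {0}ᶜ))
        simp only [zero_smul, add_zero] at ht
        refine ge_of_tendsto ht ?_
        filter_upwards [self_mem_nhdsWithin] with ε hε
        apply key
        rw [inner_add_left, hv, real_inner_smul_left, real_inner_self_eq_norm_sq, heq, zero_add]
        exact mul_ne_zero hε (by positivity)
      · exact key v hv
  refine ⟨μ, hμ0, ?_, hpsd⟩
  intro y
  have h1 := h x hxd
  have h2 := hpsd (y - x)
  have h3 := hinn (y - x)
  have h4 := norm_sub_sq_real y x
  rw [h4] at h2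
  rw [hg] at h3
  simp only [map_sub, inner_sub_left, inner_sub_right, inner_add_right,
    real_inner_self_eq_norm_sq] at h2 h3
  have h5 := hA x y
  nlinarith

lemma aux_form {M : ℕ} (Q : Matrix (Fin M) (Fin M) ℂ)
    (r : Fin M → ℂ) (s d μ : ℝ) (y : Fin M → ℂ) (t : ℂ) :
    (star (Sum.elim y (fun _ : Unit => t)) ⬝ᵥ
      (Matrix.fromBlocks (Q + (μ : ℂ) • 1) (Matrix.of fun i (_ : Unit) => r i)
          (Matrix.of fun (_ : Unit) j => star (r j))
          (Matrix.of fun (_ : Unit) (_ : Unit) => ((s - μ * d ^ 2 : ℝ) : ℂ))).mulVec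
            (Sum.elim y (fun _ : Unit => t))).re =
    (star y ⬝ᵥ Q.mulVec y).re + μ * ‖(EuclideanSpace.equiv (Fin M) ℂ).symm y‖ ^ 2
      + 2 * (t * (star y ⬝ᵥ r)).re + ‖t‖ ^ 2 * (s - μ * d ^ 2) := by
  have e1 : star (Sum.elim y (fun _ : Unit => t)) = Sum.elim (star y) (fun _ : Unit => star t) := by
    ext i; cases i <;> rfl
  have e2 : (Matrix.of fun i (_ : Unit) => r i) *ᵥ (fun _ : Unit => t) = t • r := by
    ext i; simp [mulVec, dotProduct, mul_comm]
  have e3 : (Matrix.of fun (_ : Unit) j => star (r j)) *ᵥ y = fun _ => star (star y ⬝ᵥ r) := by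
    ext i; simp [mulVec, dotProduct, mul_comm]
  have e4 : star y ⬝ᵥ y = ((‖(EuclideanSpace.equiv (Fin M) ℂ).symm y‖ ^ 2 : ℝ) : ℂ) := by
    rw [EuclideanSpace.norm_sq_eq]
    simp [dotProduct, Complex.conj_mul']
  rw [fromBlocks_mulVec, e1]
  simp only [Function.comp_def, Sum.elim_inl, Sum.elim_inr]
  rw [e2, e3, sumElim_dotProduct_sumElim, add_mulVec, smul_mulVec, one_mulVec, dotProduct_add,
    dotProduct_add, dotProduct_smul, dotProduct_smul, e4]
  have e5 : ‖t‖ ^ 2 = t.re * t.re + t.im * t.im := by rw [Complex.sq_norm, Complex.normSq_apply]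
  rw [e5]
  generalize star y ⬝ᵥ r = c
  simp [dotProduct, mulVec, -Complex.ofReal_pow, -Complex.ofReal_sub, -Complex.ofReal_mul]
  ring

/-- The spherical S-lemma. -/
theorem stmt_3 {M : ℕ} (Q : Matrix (Fin M) (Fin M) ℂ) (hQ : Q.IsHermitian)
    (r : Fin M → ℂ) (s d : ℝ) (hd : 0 < d) :
    (∀ x : Fin M → ℂ, ‖(EuclideanSpace.equiv (Fin M) ℂ).symm x‖ ≤ d →
        0 ≤ (star x ⬝ᵥ Q.mulVec x).re + 2 * (star x ⬝ᵥ r).re + s) ↔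
      (∃ μ : ℝ, 0 ≤ μ ∧
        (Matrix.fromBlocks (Q + (μ : ℂ) • 1) (Matrix.of fun i (_ : Unit) => r i)
          (Matrix.of fun (_ : Unit) j => star (r j))
          (Matrix.of fun (_ : Unit) (_ : Unit) => ((s - μ * d ^ 2 : ℝ) : ℂ))).PosSemidef) := by
  constructor
  · intro h
    let A : EuclideanSpace ℂ (Fin M) →ₗ[ℝ] EuclideanSpace ℂ (Fin M) :=
      (Matrix.toEuclideanLin Q).restrictScalars ℝ
    have hin : ∀ x y : EuclideanSpace ℂ (Fin M),
        inner ℝ x y = (star x.ofLp ⬝ᵥ y.ofLp).re := by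
      intro x y
      simp [PiLp.inner_apply, dotProduct, Complex.inner, mul_comm]
    have hAo : ∀ x, (A x).ofLp = Q *ᵥ x.ofLp := fun x => rfl
    have : FiniteDimensional ℝ (EuclideanSpace ℂ (Fin M)) :=
      FiniteDimensional.trans ℝ ℂ _
    obtain ⟨μ, hμ, h1, h2⟩ := aux_main A (by
      intro x y
      rw [hin, hin, hAo, hAo]
      rw [← Complex.conj_re, ← Complex.star_def, star_dotProduct, star_star,
        star_mulVec, hQ.eq, ← dotProduct_mulVec]) (WithLp.toLp 2 r) s d hd (by
      intro x hx
      rw [hin, hin, hAo]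
      exact h x.ofLp hx)
    refine ⟨μ, hμ, ?_⟩
    have hH : (Matrix.fromBlocks (Q + (μ : ℂ) • 1) (Matrix.of fun i (_ : Unit) => r i)
          (Matrix.of fun (_ : Unit) j => star (r j))
          (Matrix.of fun (_ : Unit) (_ : Unit) => ((s - μ * d ^ 2 : ℝ) : ℂ))).IsHermitian := by
      apply IsHermitian.fromBlocks
      · apply hQ.add
        simp [IsHermitian, conjTranspose_smul]
      · ext i j; simp
      · ext i j; simp
    refine PosSemidef.of_dotProduct_mulVec_nonneg hH fun z => ?_
    have him := hH.im_star_dotProduct_mulVec_self z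
    rw [Complex.nonneg_iff]
    refine ⟨?_, him.symm⟩
    have hz : z = Sum.elim (fun i => z (Sum.inl i)) (fun _ => z (Sum.inr ())) := by
      ext i; rcases i with i | ⟨⟩ <;> rfl
    rw [hz, aux_form]
    generalize z (Sum.inr ()) = t
    generalize (fun i => z (Sum.inl i)) = y
    by_cases ht : t = 0
    · have := h2 (WithLp.toLp 2 y)
      rw [hin, hAo] at this
      simpa [ht] using this
    · have := h1 (WithLp.toLp 2 (t⁻¹ • y))
      rw [hin, hin, hAo] at this
      have hn : 0 < ‖t‖ ^ 2 := by positivity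
      have h3 := mul_nonneg hn.le this
      refine h3.trans_eq (Eq.symm ?_)
      have n1 : ‖WithLp.toLp 2 (t⁻¹ • y)‖ ^ 2 = (‖t‖ ^ 2)⁻¹ * ‖WithLp.toLp 2 y‖ ^ 2 := by
        rw [WithLp.toLp_smul, norm_smul, norm_inv]; ring
      have htt : (star t⁻¹ * t⁻¹ : ℂ) = (((‖t‖ ^ 2)⁻¹ : ℝ) : ℂ) := by
        rw [Complex.star_def, Complex.conj_mul', norm_inv]; push_cast; ring
      have n2 : (star (t⁻¹ • y) ⬝ᵥ Q *ᵥ (t⁻¹ • y)).re = (‖t‖ ^ 2)⁻¹ * (star y ⬝ᵥ Q *ᵥ y).re := by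
        rw [star_smul, mulVec_smul, smul_dotProduct, dotProduct_smul, smul_smul, htt,
          smul_eq_mul, Complex.re_ofReal_mul]
      have n3 : ‖t‖ ^ 2 * (star (t⁻¹ • y) ⬝ᵥ r).re = (t * (star y ⬝ᵥ r)).re := by
        rw [star_smul, smul_dotProduct, ← Complex.re_ofReal_mul, smul_eq_mul, ← mul_assoc]
        congr 2
        push_cast
        rw [← Complex.mul_conj', star_inv₀, Complex.star_def, mul_assoc, mul_inv_cancel₀, mul_one]
        simpa using ht
      rw [n1, n2, ← n3]
      change _ + μ * ‖WithLp.toLp 2 y‖ ^ 2 + _ + _ = _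
      field_simp
      ring
  · rintro ⟨μ, hμ, hP⟩ x hx
    have h := hP.dotProduct_mulVec_nonneg (Sum.elim x (fun _ => 1))
    have h1 := (Complex.nonneg_iff.1 h).1
    rw [aux_form] at h1
    have h2 : ‖(EuclideanSpace.equiv (Fin M) ℂ).symm x‖ ^ 2 ≤ d ^ 2 := by gcongr
    have := mul_le_mul_of_nonneg_left h2 hμ
    simp only [one_mul, norm_one, one_pow] at h1
    linarith
end

section
/- Let (Ω, P) be a probability space, e : Ω → ℂ^M a measurable random vector, and 0 ≤ ρ ≤ 1. Let Q ∈ ℂ^{M×M} be Hermitian, r ∈ ℂ^M, s ∈ ℝ, and d ≥ 0. Suppose P({ω : ‖e(ω)‖ ≤ d}) ≥ 1 − ρ and there exists μ ≥ 0 such that the block matrix B(Q,r,s,μ,d) = [[Q + μ I_M, r],[rᴴ, s − μ d²]] is positive semidefinite. Then P({ω : f_{Q,r,s}(e(ω)) ≥ 0}) ≥ 1 − ρ. -/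
open MeasureTheory Matrix ComplexOrder

theorem stmt_4 {Ω : Type*} [MeasurableSpace Ω] (P : Measure Ω) [IsProbabilityMeasure P]
    {M : ℕ} (e : Ω → (Fin M → ℂ)) (he : Measurable e)
    (ρ : ℝ) (hρ0 : 0 ≤ ρ) (hρ1 : ρ ≤ 1)
    (Q : Matrix (Fin M) (Fin M) ℂ) (hQ : Q.IsHermitian)
    (r : Fin M → ℂ) (s d : ℝ) (hd : 0 ≤ d)
    (hPd : ENNReal.ofReal (1 - ρ) ≤ P {ω | ‖(EuclideanSpace.equiv (Fin M) ℂ).symm (e ω)‖ ≤ d})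
    (hB : ∃ μ : ℝ, 0 ≤ μ ∧
      (Matrix.fromBlocks (Q + (μ : ℂ) • 1) (Matrix.of fun i (_ : Unit) => r i)
        (Matrix.of fun (_ : Unit) j => star (r j))
        (Matrix.of fun (_ : Unit) (_ : Unit) => ((s - μ * d ^ 2 : ℝ) : ℂ))).PosSemidef) :
    ENNReal.ofReal (1 - ρ) ≤
      P {ω | 0 ≤ (star (e ω) ⬝ᵥ Q.mulVec (e ω)).re + 2 * (star (e ω) ⬝ᵥ r).re + s} := by
  obtain ⟨μ, hμ, hB⟩ := hB
  refine hPd.trans (measure_mono ?_)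
  intro ω hω
  simp only [Set.mem_setOf_eq] at hω ⊢
  generalize e ω = x at hω ⊢
  have h := hB.dotProduct_mulVec_nonneg (Sum.elim x (fun _ => 1))
  have hs : star (Sum.elim x (fun _ : Unit => (1 : ℂ))) = Sum.elim (star x) (fun _ => 1) := by
    ext i
    rcases i with i | i <;> simp
  have e1 : (Matrix.of fun i (_ : Unit) => r i) *ᵥ (fun _ => (1 : ℂ)) = r := by
    ext i
    simp [Matrix.mulVec, dotProduct]
  have e2 : (Matrix.of fun (_ : Unit) j => star (r j)) *ᵥ x = fun _ => star r ⬝ᵥ x := by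
    ext i
    simp [Matrix.mulVec, dotProduct]
  have e3 : (Matrix.of fun (_ : Unit) (_ : Unit) => ((s - μ * d ^ 2 : ℝ) : ℂ)) *ᵥ
      (fun _ => (1 : ℂ)) = fun _ => ((s - μ * d ^ 2 : ℝ) : ℂ) := by
    ext i
    simp [Matrix.mulVec, dotProduct]
  have e4 : (star r ⬝ᵥ x).re = (star x ⬝ᵥ r).re := by
    have : star r ⬝ᵥ x = star (star x ⬝ᵥ r) := by
      rw [Matrix.star_dotProduct, dotProduct_comm]
    rw [this]
    simp
  have e5 : (star x ⬝ᵥ x).re = ‖(EuclideanSpace.equiv (Fin M) ℂ).symm x‖ ^ 2 := by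
    rw [EuclideanSpace.norm_sq_eq]
    simp only [dotProduct, Complex.re_sum]
    refine Finset.sum_congr rfl fun i _ => ?_
    rw [← Complex.normSq_eq_norm_sq]
    simp [Complex.normSq_apply]
  rw [hs, Matrix.fromBlocks_mulVec] at h
  simp only [Sum.elim_comp_inl, Sum.elim_comp_inr, e1, e2, e3, sumElim_dotProduct_sumElim] at h
  rw [Complex.le_def] at h
  have h1 := h.1
  have e6 : (star x ⬝ᵥ ((Q + (μ : ℂ) • 1) *ᵥ x + r)).re =
      (star x ⬝ᵥ Q *ᵥ x).re + μ * (star x ⬝ᵥ x).re + (star x ⬝ᵥ r).re := by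
    rw [Matrix.add_mulVec, Matrix.smul_mulVec, Matrix.one_mulVec, dotProduct_add, dotProduct_add,
      dotProduct_smul]
    simp
  have e7 : ((fun _ : Unit => (1 : ℂ)) ⬝ᵥ ((fun _ => star r ⬝ᵥ x) +
      fun _ => ((s - μ * d ^ 2 : ℝ) : ℂ))).re = (star r ⬝ᵥ x).re + (s - μ * d ^ 2) := by
    simp only [dotProduct, Finset.univ_unique, Finset.sum_singleton, Pi.add_apply, one_mul,
      Complex.add_re, Complex.ofReal_re]
  rw [Complex.add_re, e6, e7, e4, e5, Complex.zero_re] at h1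
  have h2 : μ * ‖(EuclideanSpace.equiv (Fin M) ℂ).symm x‖ ^ 2 ≤ μ * d ^ 2 := by
    gcongr
  linarith
end
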